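/- arXiv:1610.06834 — 4 statements merged into one kernel-verified Lean document; each statement's English description precedes it below -/
import Mathlib

section
/- (Lemma 4.2(i): zero projected-gradient step characterizes KKT points.) Let z ∈ ℝⁿ, let α > 0, let a ∈ ℝⁿ (playing the role of ∇J(z)), let b₁,…,b_m ∈ ℝⁿ and scalars g₁,…,g_m ∈ ℝ (playing ∇g_j(z) and g_j(z)), and let c₁,…,c_p ∈ ℝⁿ and scalars h₁,…,h_p ∈ ℝ (playing ∇h_i(z) and h_i(z)). Define the polyhedron C := {d ∈ ℝⁿ : g_j + ⟨b_j, d⟩ ≤ 0 for all j = 1,…,m and h_i + ⟨c_i, d⟩ = 0 for all i = 1,…,p}, and assume C is nonempty. Then the following are equivalent: (1) 0 ∈ C and ‖α a‖ ≤ ‖d + α a‖ for all d ∈ C (i.e., 0 is the Euclidean projection of −α a onto C); (2) g_j ≤ 0 for all j, h_i = 0 for all i, and there exist λ ∈ ℝᵐ with λ ≥ 0 and ν ∈ ℝᵖ such that a + Σ_{j=1}^m λ_j b_j + Σ_{i=1}^p ν_i c_i = 0 and λ_j g_j = 0 for every j. -/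
open scoped RealInnerProductSpace

/-!
A step `d = 0` is the projection of `-α • a` onto the convex polyhedron `C` iff the variational
inequality `0 ≤ ⟪a, d⟫` holds on `C`. When `0 ∈ C`, a direction along which no active constraint
increases can be scaled down until it lies in `C`, so the variational inequality only sees the
active constraints, and Farkas' lemma turns it into the existence of multipliers.
-/

open Filter

section Farkas

variable {𝕜 V ι κ : Type*} [Field 𝕜] [AddCommGroup V] [Module 𝕜 V]

open Module (Dual)

lemma sub_smul_mem_dualAnnihilator_of_mem_inf_ker {W : Submodule 𝕜 V} {φ ψ : Dual 𝕜 V} {y : V}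
    (hyW : y ∈ W) (hφy : φ y ≠ 0) (hψ : ψ ∈ (W ⊓ φ.ker).dualAnnihilator) :
    ψ - (ψ y / φ y) • φ ∈ W.dualAnnihilator := by
  rw [Submodule.mem_dualAnnihilator] at hψ ⊢
  intro x hx
  have hmem : x - (φ x / φ y) • y ∈ W ⊓ φ.ker :=
    ⟨W.sub_mem hx (W.smul_mem _ hyW), by simp [hφy]⟩
  have hzero := hψ _ hmem
  simp only [map_sub, map_smul, smul_eq_mul] at hzero
  simp only [LinearMap.sub_apply, LinearMap.smul_apply, smul_eq_mul]
  linear_combination hzero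

variable [LinearOrder 𝕜] [IsStrictOrderedRing 𝕜]

/-- Allowing a subspace `W` lets the induction pass from `W` to the kernel of the new functional
in `W`, while all functionals stay defined on the same space. -/
theorem farkas_submodule (f : ι → Dual 𝕜 V) (A : Dual 𝕜 V)
    (s : Finset ι) (W : Submodule 𝕜 V)
    (hA : ∀ x ∈ W, (∀ i ∈ s, f i x ≤ 0) → A x ≤ 0) :
    ∃ w : ι → 𝕜, (∀ i, 0 ≤ w i) ∧ A - ∑ i ∈ s, w i • f i ∈ W.dualAnnihilator := by
  classical
  induction s using Finset.induction_on generalizing W with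
  | empty =>
    refine ⟨0, fun _ => le_rfl, (Submodule.mem_dualAnnihilator _).2 fun x hx => ?_⟩
    have hle : A x ≤ 0 := hA x hx (by simp)
    have hge : A (-x) ≤ 0 := hA (-x) (W.neg_mem hx) (by simp)
    simpa using le_antisymm hle (by simpa using hge)
  | insert k s hk ih =>
    suffices ∃ c : 𝕜, 0 ≤ c ∧ ∃ w : ι → 𝕜, (∀ i, 0 ≤ w i) ∧
        A - ∑ i ∈ s, w i • f i - c • f k ∈ W.dualAnnihilator by
      obtain ⟨c, hc, w, hw, hmem⟩ := this
      have hsum : ∑ i ∈ s, Function.update w k c i • f i = ∑ i ∈ s, w i • f i :=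
        Finset.sum_congr rfl fun i hi => by
          rw [Function.update_of_ne (ne_of_mem_of_not_mem hi hk)]
      refine ⟨Function.update w k c, fun i => ?_, ?_⟩
      · rcases eq_or_ne i k with rfl | hik <;> simp [*]
      · rwa [Finset.sum_insert hk, hsum, Function.update_self, add_comm, ← sub_sub]
    by_cases hAs : ∀ x ∈ W, (∀ i ∈ s, f i x ≤ 0) → A x ≤ 0
    · obtain ⟨w, hw, hmem⟩ := ih W hAs
      exact ⟨0, le_rfl, w, hw, by simpa using hmem⟩
    · push Not at hAs
      obtain ⟨y, hyW, hfy, hAy⟩ := hAs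
      have hfky : 0 < f k y := by
        by_contra! hle
        exact hAy.not_ge (hA y hyW ((Finset.forall_mem_insert _ _ _).2 ⟨hle, hfy⟩))
      obtain ⟨w, hw, hmem⟩ := ih (W ⊓ (f k).ker) fun x hx hfx =>
        hA x hx.1 ((Finset.forall_mem_insert _ _ _).2 ⟨hx.2.le, hfx⟩)
      have hsum : ∑ i ∈ s, w i * f i y ≤ 0 :=
        Finset.sum_nonpos fun i hi => mul_nonpos_of_nonneg_of_nonpos (hw i) (hfy i hi)
      have hψy : 0 ≤ (A - ∑ i ∈ s, w i • f i) y := by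
        simpa using hsum.trans hAy.le
      exact ⟨_, div_nonneg hψy hfky.le, w, hw,
        sub_smul_mem_dualAnnihilator_of_mem_inf_ker hyW hfky.ne' hmem⟩

theorem farkas_dual [Fintype κ] (f : ι → Dual 𝕜 V) (s : Finset ι)
    (e : κ → Dual 𝕜 V) (A : Dual 𝕜 V)
    (hA : ∀ x, (∀ i ∈ s, f i x ≤ 0) → (∀ k, e k x = 0) → A x ≤ 0) :
    ∃ (w : ι → 𝕜) (v : κ → 𝕜), (∀ i, 0 ≤ w i) ∧
      A = ∑ i ∈ s, w i • f i + ∑ k, v k • e k := by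
  obtain ⟨w, hw, hmem⟩ := farkas_submodule f A s (⨅ k, (e k).ker)
    fun x hx hfx => hA x hfx (by simpa using hx)
  have hspan : A - ∑ i ∈ s, w i • f i ∈ Submodule.span 𝕜 (Set.range e) :=
    mem_span_of_iInf_ker_le_ker fun x hx => (Submodule.mem_dualAnnihilator _).1 hmem x hx
  obtain ⟨v, hv⟩ := (Submodule.mem_span_range_iff_exists_fun 𝕜).1 hspan
  exact ⟨w, v, hw, by rw [hv, add_sub_cancel]⟩

end Farkas

lemma exists_pos_forall_add_mul_nonpos {𝕜 ι : Type*} [Field 𝕜] [LinearOrder 𝕜]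
    [IsStrictOrderedRing 𝕜] [Finite ι] {u v : ι → 𝕜} (hu : ∀ j, u j ≤ 0)
    (hv : ∀ j, u j = 0 → v j ≤ 0) : ∃ t > 0, ∀ j, u j + t * v j ≤ 0 := by
  have hlarge : ∀ᶠ r : 𝕜 in atTop, ∀ j, r * u j + v j ≤ 0 := by
    refine eventually_all.2 fun j => ?_
    rcases (hu j).lt_or_eq with hneg | hzero
    · filter_upwards [eventually_ge_atTop (v j / -u j)] with r hr
      linarith [(div_le_iff₀ (neg_pos.2 hneg)).1 hr]
    · exact .of_forall fun r => by simpa [hzero] using hv j hzero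
  obtain ⟨r, hr, hpos⟩ := (hlarge.and (eventually_gt_atTop 0)).exists
  refine ⟨r⁻¹, inv_pos.2 hpos, fun j => ?_⟩
  calc u j + r⁻¹ * v j = r⁻¹ * (r * u j + v j) := by field_simp
    _ ≤ 0 := mul_nonpos_of_nonneg_of_nonpos (inv_nonneg.2 hpos.le) (hr j)

section InnerProductSpace

variable {E ι κ : Type*} [NormedAddCommGroup E] [InnerProductSpace ℝ E]

theorem farkas_inner [Fintype κ] (b : ι → E) (s : Finset ι)
    (c : κ → E) (a : E)
    (ha : ∀ d, (∀ j ∈ s, ⟪b j, d⟫ ≤ 0) → (∀ i, ⟪c i, d⟫ = 0) → ⟪a, d⟫ ≤ 0) :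
    ∃ (lam : ι → ℝ) (nu : κ → ℝ), (∀ j, 0 ≤ lam j) ∧
      a = ∑ j ∈ s, lam j • b j + ∑ i, nu i • c i := by
  obtain ⟨lam, nu, hlam, heq⟩ := farkas_dual
    (fun j => innerₗ E (b j)) s (fun i => innerₗ E (c i)) (innerₗ E a) ha
  refine ⟨lam, nu, hlam, ext_inner_right ℝ fun d => ?_⟩
  simpa [inner_add_left, sum_inner, real_inner_smul_left] using LinearMap.congr_fun heq d

theorem forall_norm_le_norm_add_iff_forall_inner_nonneg {K : Set E} (hK : Convex ℝ K)
    (h0 : 0 ∈ K) (v : E) :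
    (∀ d ∈ K, ‖v‖ ≤ ‖d + v‖) ↔ ∀ d ∈ K, 0 ≤ ⟪v, d⟫ := by
  have : Nonempty K := ⟨⟨0, h0⟩⟩
  have hbdd : BddBelow (Set.range fun d : K => ‖-v - d‖) :=
    ⟨0, Set.forall_mem_range.2 fun _ => norm_nonneg _⟩
  have hnorm (d : E) : ‖-v - d‖ = ‖d + v‖ := by rw [← norm_neg]; congr 1; abel
  calc (∀ d ∈ K, ‖v‖ ≤ ‖d + v‖) ↔ ‖-v - 0‖ = ⨅ d : K, ‖-v - d‖ := by
        rw [← (ciInf_le hbdd ⟨0, h0⟩).ge_iff_eq', le_ciInf_iff hbdd]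
        simp [hnorm]
    _ ↔ ∀ d ∈ K, 0 ≤ ⟪v, d⟫ := by
        rw [norm_eq_iInf_iff_real_inner_le_zero hK h0]
        simp

/-- The polyhedron of steps `d` that satisfy the linearized constraints, where `b`, `g` are the
gradients and values of the inequality constraints and `c`, `h` those of the equality
constraints. -/
def linearizedFeasibleSet (b : ι → E) (g : ι → ℝ) (c : κ → E) (h : κ → ℝ) : Set E :=
  {d | (∀ j, g j + ⟪b j, d⟫ ≤ 0) ∧ ∀ i, h i + ⟪c i, d⟫ = 0}

variable {b : ι → E} {g : ι → ℝ} {c : κ → E} {h : κ → ℝ}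

lemma zero_mem_linearizedFeasibleSet_iff :
    0 ∈ linearizedFeasibleSet b g c h ↔ (∀ j, g j ≤ 0) ∧ ∀ i, h i = 0 := by
  simp [linearizedFeasibleSet]

lemma convex_linearizedFeasibleSet : Convex ℝ (linearizedFeasibleSet b g c h) := by
  have hset : linearizedFeasibleSet b g c h =
      (⋂ j, {d | innerₗ E (b j) d ≤ -g j}) ∩ ⋂ i, {d | innerₗ E (c i) d = -h i} := by
    ext d
    simp [linearizedFeasibleSet, le_neg_iff_add_nonpos_left, eq_neg_iff_add_eq_zero, add_comm]
  rw [hset]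
  exact (convex_iInter fun j => convex_halfSpace_le (innerₗ E (b j)).isLinear _).inter
    (convex_iInter fun i => convex_hyperplane (innerₗ E (c i)).isLinear _)

lemma exists_pos_smul_mem_linearizedFeasibleSet [Finite ι] {d : E}
    (h0 : 0 ∈ linearizedFeasibleSet b g c h) (hb : ∀ j, g j = 0 → ⟪b j, d⟫ ≤ 0)
    (hc : ∀ i, ⟪c i, d⟫ = 0) : ∃ t > (0 : ℝ), t • d ∈ linearizedFeasibleSet b g c h := by
  obtain ⟨hg, hh⟩ := zero_mem_linearizedFeasibleSet_iff.1 h0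
  obtain ⟨t, ht, hgt⟩ := exists_pos_forall_add_mul_nonpos hg hb
  exact ⟨t, ht, by simpa [linearizedFeasibleSet, real_inner_smul_right, hc, hh] using hgt⟩

variable [Fintype ι] [Fintype κ] {a : E}

theorem exists_multipliers_of_forall_inner_nonneg (h0 : 0 ∈ linearizedFeasibleSet b g c h)
    (ha : ∀ d ∈ linearizedFeasibleSet b g c h, 0 ≤ ⟪a, d⟫) :
    ∃ (lam : ι → ℝ) (nu : κ → ℝ), (∀ j, 0 ≤ lam j) ∧
      a + ∑ j, lam j • b j + ∑ i, nu i • c i = 0 ∧ ∀ j, lam j * g j = 0 := by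
  have hactive (d : E) (hb : ∀ j ∈ Finset.univ.filter (g · = 0), ⟪b j, d⟫ ≤ 0)
      (hc : ∀ i, ⟪c i, d⟫ = 0) : ⟪-a, d⟫ ≤ 0 := by
    obtain ⟨t, ht, hmem⟩ :=
      exists_pos_smul_mem_linearizedFeasibleSet h0 (fun j hj => hb j (by simpa using hj)) hc
    have hnonneg : 0 ≤ t * ⟪a, d⟫ := by simpa [real_inner_smul_right] using ha _ hmem
    simpa using nonneg_of_mul_nonneg_right hnonneg ht
  obtain ⟨w, nu, hw, heq⟩ := farkas_inner b _ c (-a) hactive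
  refine ⟨fun j => if g j = 0 then w j else 0, nu, fun j => ?_, ?_, fun j => ?_⟩
  · beta_reduce
    split_ifs
    exacts [hw j, le_rfl]
  · simp only [ite_smul, zero_smul, ← Finset.sum_filter]
    rw [add_assoc, ← heq, add_neg_cancel]
  · simp +contextual

theorem inner_nonneg_of_multipliers (hh : ∀ i, h i = 0) {lam : ι → ℝ} {nu : κ → ℝ}
    (hlam : ∀ j, 0 ≤ lam j) (hstat : a + ∑ j, lam j • b j + ∑ i, nu i • c i = 0)
    (hcomp : ∀ j, lam j * g j = 0) {d : E} (hd : d ∈ linearizedFeasibleSet b g c h) :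
    0 ≤ ⟪a, d⟫ := by
  have hineq : ∑ j, lam j * ⟪b j, d⟫ ≤ 0 := Finset.sum_nonpos fun j _ => by
    simpa [mul_add, hcomp j] using mul_nonpos_of_nonneg_of_nonpos (hlam j) (hd.1 j)
  have heq (i : κ) : ⟪c i, d⟫ = 0 := by simpa [hh i] using hd.2 i
  have hinner : ⟪a, d⟫ + ∑ j, lam j * ⟪b j, d⟫ = 0 := by
    simpa [inner_add_left, sum_inner, real_inner_smul_left, heq] using congrArg (⟪·, d⟫) hstat
  linarith

theorem stmt_0_general (α : ℝ) (hα : 0 < α) (a : E) (b : ι → E) (g : ι → ℝ) (c : κ → E)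
    (h : κ → ℝ) :
    (0 ∈ linearizedFeasibleSet b g c h ∧
        ∀ d ∈ linearizedFeasibleSet b g c h, ‖α • a‖ ≤ ‖d + α • a‖) ↔
      ((∀ j, g j ≤ 0) ∧ (∀ i, h i = 0) ∧
        ∃ (lam : ι → ℝ) (nu : κ → ℝ), (∀ j, 0 ≤ lam j) ∧
          a + ∑ j, lam j • b j + ∑ i, nu i • c i = 0 ∧ ∀ j, lam j * g j = 0) := by
  rw [← and_assoc, ← zero_mem_linearizedFeasibleSet_iff (b := b) (c := c)]
  refine and_congr_right fun h0 => ?_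
  rw [forall_norm_le_norm_add_iff_forall_inner_nonneg convex_linearizedFeasibleSet h0]
  simp only [real_inner_smul_left, mul_nonneg_iff_of_pos_left hα]
  refine ⟨exists_multipliers_of_forall_inner_nonneg h0, ?_⟩
  rintro ⟨lam, nu, hlam, hstat, hcomp⟩ d hd
  exact inner_nonneg_of_multipliers (zero_mem_linearizedFeasibleSet_iff.1 h0).2
    hlam hstat hcomp hd

end InnerProductSpace

/-- Lemma 4.2(i): the zero projected-gradient step characterizes KKT points.
`0` is the Euclidean projection of `-α • a` onto the linearized constraint set `C`
iff the linearized constraints are satisfied at `0` (i.e. `g ≤ 0`, `h = 0`) and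
there are multipliers `λ ≥ 0`, `ν` with stationarity and complementarity. -/
theorem stmt_0 {n m p : ℕ} (α : ℝ) (hα : 0 < α)
    (a : EuclideanSpace ℝ (Fin n))
    (b : Fin m → EuclideanSpace ℝ (Fin n)) (g : Fin m → ℝ)
    (c : Fin p → EuclideanSpace ℝ (Fin n)) (h : Fin p → ℝ)
    (C : Set (EuclideanSpace ℝ (Fin n)))
    (hC : C = {d | (∀ j, g j + ⟪b j, d⟫ ≤ 0) ∧ (∀ i, h i + ⟪c i, d⟫ = 0)})
    (hne : C.Nonempty) :
    ((0 : EuclideanSpace ℝ (Fin n)) ∈ C ∧ ∀ d ∈ C, ‖α • a‖ ≤ ‖d + α • a‖) ↔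
      ((∀ j, g j ≤ 0) ∧ (∀ i, h i = 0) ∧
        ∃ (lam : Fin m → ℝ) (nu : Fin p → ℝ),
          (∀ j, 0 ≤ lam j) ∧
          a + (∑ j, lam j • b j) + (∑ i, nu i • c i) = 0 ∧
          (∀ j, lam j * g j = 0)) := by
  subst hC
  exact stmt_0_general α hα a b g c h
end

section
/- (Derivative of the merit function, key computation in Lemma 4.4.) Let J : ℝⁿ → ℝ, g : ℝⁿ → ℝᵐ, h : ℝⁿ → ℝᵖ be differentiable at z ∈ ℝⁿ with gradients ∇J(z), ∇g_j(z), ∇h_i(z). Let ρ ≥ 0, d_z ∈ ℝⁿ, s, d_s, λ, d_λ ∈ ℝᵐ, ν, d_ν ∈ ℝᵖ, and assume the linearized feasibility relations ⟨∇g_j(z), d_z⟩ + d_{s,j} = −(g_j(z) + s_j) for all j and ⟨∇h_i(z), d_z⟩ = −h_i(z) for all i. Define φ(t) := L_aug^ρ(z + t d_z, λ + t d_λ, ν + t d_ν, s + t d_s). Then φ is differentiable at t = 0 and φ'(0) = ⟨∇J(z), d_z⟩ − ⟨g(z) + s, λ − d_λ⟩ − ρ‖g(z) + s‖² − ⟨h(z),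 ν − d_ν⟩ − ρ‖h(z)‖². -/
open scoped RealInnerProductSpace

/-!
A Newton step for the linearized constraints makes each constraint residual `r` move with initial
velocity `r' = -r`. With a multiplier `μ`, the product rule then turns the derivative of
`⟪r, μ⟫ + (ρ / 2) * ‖r‖ ^ 2` into `⟪-r, μ⟫ + ⟪r, μ'⟫ - ρ * ‖r‖ ^ 2`, for the inequality and
the equality constraints alike.
-/

section Calculus

theorem hasDerivAt_add_smul_const {𝕜 E : Type*} [NontriviallyNormedField 𝕜]
    [NormedAddCommGroup E] [NormedSpace 𝕜 E] (x v : E) (t : 𝕜) :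
    HasDerivAt (fun τ : 𝕜 => x + τ • v) v t := by
  simpa only [one_smul] using ((hasDerivAt_id' t).smul_const v).const_add x

theorem hasDerivAt_piLp {𝕜 ι : Type*} [NontriviallyNormedField 𝕜] [Fintype ι]
    {E : ι → Type*} [∀ i, NormedAddCommGroup (E i)] [∀ i, NormedSpace 𝕜 (E i)]
    (p : ENNReal) [Fact (1 ≤ p)] {f : 𝕜 → PiLp p E} {f' : PiLp p E} {x : 𝕜} :
    HasDerivAt f f' x ↔ ∀ i, HasDerivAt (fun y => f y i) (f' i) x := by
  simp only [← hasDerivWithinAt_univ, hasDerivWithinAt_iff_hasFDerivWithinAt,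
    hasFDerivWithinAt_piLp, ContinuousLinearMap.comp_toSpanSingleton, PiLp.proj_apply]

variable {𝕜 E : Type*} [RCLike 𝕜] [NormedAddCommGroup E] [InnerProductSpace 𝕜 E] [CompleteSpace E]

theorem hasLineDerivAt_of_hasGradientAt {f : E → 𝕜} {a x : E} (hf : HasGradientAt f a x) (v : E) :
    HasLineDerivAt 𝕜 f (inner 𝕜 a v) x v :=
  hf.hasFDerivAt.hasLineDerivAt v

theorem hasLineDerivAt_euclidean_of_hasGradientAt {ι : Type*} [Fintype ι]
    {f : E → EuclideanSpace 𝕜 ι} {a : ι → E} {x : E}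
    (hf : ∀ i, HasGradientAt (fun y => f y i) (a i) x) (v : E) :
    HasLineDerivAt 𝕜 f (WithLp.toLp 2 fun i => inner 𝕜 (a i) v) x v :=
  (hasDerivAt_piLp (E := fun _ => 𝕜) 2).2 fun i => hasLineDerivAt_of_hasGradientAt (hf i) v

end Calculus

section MeritFunction

variable {F G : Type*} [NormedAddCommGroup F] [InnerProductSpace ℝ F]
  [NormedAddCommGroup G] [InnerProductSpace ℝ G]

/-- The augmented Lagrangian `L_aug^ρ(z, λ, ν, s)` with cost `J`, slackened inequality residual
`g z + s`, equality residual `h z`, multipliers `lam`, `nu` and penalty parameter `ρ`. Only the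
inner products matter, so `F` and `G` replace the Euclidean spaces of constraint values. -/
noncomputable def augmentedLagrangian {E : Type*} (J : E → ℝ) (g : E → F) (h : E → G) (ρ : ℝ)
    (z : E) (lam : F) (nu : G) (s : F) : ℝ :=
  J z + ⟪g z + s, lam⟫ + ⟪h z, nu⟫ + (ρ / 2) * ‖g z + s‖ ^ 2 + (ρ / 2) * ‖h z‖ ^ 2

variable {E : Type*} [AddCommGroup E] [Module ℝ E]

theorem hasDerivAt_inner_add_penalty_of_lineDeriv_eq_neg {r : E → F} {z dz : E}
    (hr : HasLineDerivAt ℝ r (-r z) z dz) (ρ : ℝ) (μ dμ : F) :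
    HasDerivAt (fun t : ℝ => ⟪r (z + t • dz), μ + t • dμ⟫ + (ρ / 2) * ‖r (z + t • dz)‖ ^ 2)
      (-⟪r z, μ - dμ⟫ - ρ * ‖r z‖ ^ 2) 0 := by
  have pairing := HasDerivAt.inner ℝ hr (hasDerivAt_add_smul_const μ dμ 0)
  have penalty := (HasDerivAt.norm_sq hr).const_mul (ρ / 2)
  refine (pairing.fun_add penalty).congr_deriv ?_
  simp only [zero_smul, add_zero, inner_neg_left, inner_neg_right, inner_sub_right,
    real_inner_self_eq_norm_sq]
  ring

theorem stmt_2_general {J : E → ℝ} {g : E → F} {h : E → G} {z dz : E} {J' : ℝ} {g' : F} {h' : G}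
    (hJ : HasLineDerivAt ℝ J J' z dz) (hg : HasLineDerivAt ℝ g g' z dz)
    (hh : HasLineDerivAt ℝ h h' z dz) (ρ : ℝ) {s ds : F} (lam dlam : F) (nu dnu : G)
    (hlin_g : g' + ds = -(g z + s)) (hlin_h : h' = -h z) :
    HasDerivAt
      (fun t : ℝ => augmentedLagrangian J g h ρ
        (z + t • dz) (lam + t • dlam) (nu + t • dnu) (s + t • ds))
      (J' - ⟪g z + s, lam - dlam⟫ - ρ * ‖g z + s‖ ^ 2 - ⟪h z, nu - dnu⟫ - ρ * ‖h z‖ ^ 2) 0 := by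
  have slack_residual :
      HasLineDerivAt ℝ (fun q : E × F => g q.1 + q.2) (-(g z + s)) (z, s) (dz, ds) :=
    hlin_g ▸ HasDerivAt.fun_add hg (hasDerivAt_add_smul_const s ds 0)
  have inequality_terms :=
    hasDerivAt_inner_add_penalty_of_lineDeriv_eq_neg (r := fun q : E × F => g q.1 + q.2)
      slack_residual ρ lam dlam
  have equality_terms :=
    hasDerivAt_inner_add_penalty_of_lineDeriv_eq_neg (hlin_h ▸ hh) ρ nu dnu
  refine (((HasDerivAt.fun_add hJ inequality_terms).fun_add equality_terms).congr_deriv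
    (by ring)).congr_of_eventuallyEq (.of_forall fun t => ?_)
  simp only [augmentedLagrangian, Prod.smul_mk, Prod.mk_add_mk]
  ring

end MeritFunction

/-- Derivative of the merit function (key computation in Lemma 4.4).
With the augmented Lagrangian
`L_aug^ρ(z,λ,ν,s) = J(z) + ⟪g(z)+s, λ⟫ + ⟪h(z), ν⟫ + (ρ/2)‖g(z)+s‖² + (ρ/2)‖h(z)‖²`
and `φ(t) = L_aug^ρ` along the direction `(d_z, d_λ, d_ν, d_s)`, under the linearized
feasibility relations the function `φ` has derivative at `0` equal to
`⟪∇J(z), d_z⟫ − ⟪g(z)+s, λ−d_λ⟫ − ρ‖g(z)+s‖² − ⟪h(z), ν−d_ν⟫ − ρ‖h(z)‖²`. -/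
theorem stmt_2 {n m p : ℕ}
    (J : EuclideanSpace ℝ (Fin n) → ℝ)
    (g : EuclideanSpace ℝ (Fin n) → EuclideanSpace ℝ (Fin m))
    (h : EuclideanSpace ℝ (Fin n) → EuclideanSpace ℝ (Fin p))
    (z : EuclideanSpace ℝ (Fin n))
    (aJ : EuclideanSpace ℝ (Fin n)) (hJ : HasGradientAt J aJ z)
    (bg : Fin m → EuclideanSpace ℝ (Fin n))
    (hg : ∀ j, HasGradientAt (fun w => g w j) (bg j) z)
    (ch : Fin p → EuclideanSpace ℝ (Fin n))
    (hh : ∀ i, HasGradientAt (fun w => h w i) (ch i) z)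
    (ρ : ℝ) (hρ : 0 ≤ ρ)
    (dz : EuclideanSpace ℝ (Fin n))
    (s ds lam dlam : EuclideanSpace ℝ (Fin m))
    (nu dnu : EuclideanSpace ℝ (Fin p))
    (hlin_g : ∀ j, ⟪bg j, dz⟫ + ds j = -(g z j + s j))
    (hlin_h : ∀ i, ⟪ch i, dz⟫ = -(h z i)) :
    HasDerivAt
      (fun t : ℝ =>
        J (z + t • dz) + ⟪g (z + t • dz) + (s + t • ds), lam + t • dlam⟫ +
          ⟪h (z + t • dz), nu + t • dnu⟫ +
          (ρ / 2) * ‖g (z + t • dz) + (s + t • ds)‖ ^ 2 +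
          (ρ / 2) * ‖h (z + t • dz)‖ ^ 2)
      (⟪aJ, dz⟫ - ⟪g z + s, lam - dlam⟫ - ρ * ‖g z + s‖ ^ 2 -
        ⟪h z, nu - dnu⟫ - ρ * ‖h z‖ ^ 2)
      0 :=
  stmt_2_general (hasLineDerivAt_of_hasGradientAt hJ dz)
    (hasLineDerivAt_euclidean_of_hasGradientAt hg dz)
    (hasLineDerivAt_euclidean_of_hasGradientAt hh dz) ρ lam dlam nu dnu
    (PiLp.ext hlin_g) (PiLp.ext hlin_h)
end

section
/- (Lemma B.1(i), regularity part: LICQ is preserved by squared slacks.) Let b₁,…,b_m ∈ ℝⁿ and c₁,…,c_p ∈ ℝⁿ (playing the constraint gradients ∇g_j(z⋆) and ∇h_i(z⋆)), let g₁,…,g_m ≤ 0 be reals (the values g_j(z⋆)), and set y⋆_j := √(−2 g_j) ∈ ℝ. Let A := {j ∈ {1,…,m} : g_j = 0} be the active index set. In ℝⁿ × ℝᵐ consider the family of m + p vectors consisting of v_j := (b_j, y⋆_j e_j) for j = 1,…,m (where e_j is the j-th standard basis vector of ℝᵐ) together with w_i := (c_i, 0) for i = 1,…,p. Then this family is linearly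 independent if and only if the family {c_i : i = 1,…,p} ∪ {b_j : j ∈ A} is linearly independent in ℝⁿ. -/
/-!
The slack components `y⋆ⱼ eⱼ` vanish on the active indices and are linearly independent on the
inactive ones. Projecting a vanishing combination to the slack space therefore kills every inactive
coefficient, and what remains is a relation among the `cᵢ` and the active `bⱼ`.
-/

section Module

variable {R ι κ M N : Type*} [Ring R] [AddCommGroup M] [Module R M] [AddCommGroup N] [Module R N]

theorem linearIndependent_iff_linearIndepOn_of_map_eq_zero (f : M →ₗ[R] N) {v : ι → M} {s : Set ι}
    (hs : ∀ i ∈ s, f (v i) = 0) (hfv : LinearIndepOn R (f ∘ v) sᶜ) :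
    LinearIndependent R v ↔ LinearIndepOn R v s := by
  refine ⟨fun hv ↦ hv.linearIndepOn s, fun hv ↦ ?_⟩
  have span_le_ker : Submodule.span R (v '' s) ≤ LinearMap.ker f :=
    Submodule.span_le.2 (Set.image_subset_iff.2 hs)
  have disjoint_ker : Disjoint (Submodule.span R (v '' sᶜ)) (LinearMap.ker f) := by
    rw [Set.image_eq_range]
    exact Submodule.range_ker_disjoint hfv
  have hunion := hv.union (LinearIndepOn.of_comp f hfv) (disjoint_ker.symm.mono_left span_le_ker)
  rwa [Set.union_compl_self, linearIndepOn_univ_iff] at hunion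

theorem linearIndependent_sumElim_prodMk_zero_iff (b : ι → M) (c : κ → M) {d : ι → N} {s : Set ι}
    (hs : ∀ j ∈ s, d j = 0) (hd : LinearIndepOn R d sᶜ) :
    LinearIndependent R (Sum.elim (fun j ↦ (b j, d j)) (fun i ↦ (c i, 0))) ↔
      LinearIndependent R (Sum.elim c (fun j : s ↦ b j)) := by
  let v : ι ⊕ κ → M × N := Sum.elim (fun j ↦ (b j, d j)) (fun i ↦ (c i, 0))
  let e : κ ⊕ s → ι ⊕ κ := Sum.elim Sum.inr (Sum.inl ∘ Subtype.val)
  have he : Function.Injective e :=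
    Sum.inr_injective.sumElim (Sum.inl_injective.comp Subtype.val_injective) (by simp)
  have compl_range_e : (Set.range e)ᶜ = Sum.inl '' sᶜ := by
    ext (j | i) <;> simp [e]
  have v_comp_e : v ∘ e = LinearMap.inl R M N ∘ Sum.elim c (fun j : s ↦ b j) := by
    funext x
    rcases x with i | j
    · rfl
    · exact Prod.ext rfl (hs j j.2)
  have hsnd_range : ∀ x ∈ Set.range e, LinearMap.snd R M N (v x) = 0 :=
    Set.forall_mem_range.2 fun x ↦ congrArg Prod.snd (congrFun v_comp_e x)
  have hsnd_compl : LinearIndepOn R (LinearMap.snd R M N ∘ v) (Set.range e)ᶜ := by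
    rw [compl_range_e]
    exact hd.image_of_comp Sum.inl _
  calc LinearIndependent R v
    _ ↔ LinearIndepOn R v (Set.range e) :=
      linearIndependent_iff_linearIndepOn_of_map_eq_zero _ hsnd_range hsnd_compl
    _ ↔ LinearIndependent R (v ∘ e) := linearIndepOn_range_iff he v
    _ ↔ LinearIndependent R (Sum.elim c (fun j : s ↦ b j)) := by
      rw [v_comp_e, LinearMap.linearIndependent_iff_of_injOn _ LinearMap.inl_injective.injOn]

end Module

theorem linearIndepOn_pi_single_of_ne_zero {R ι : Type*} {M : ι → Type*} [DecidableEq ι] [Ring R]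
    [IsDomain R] [∀ j, AddCommGroup (M j)] [∀ j, Module R (M j)]
    [∀ j, Module.IsTorsionFree R (M j)] {y : ∀ j, M j} {s : Set ι} (hy : ∀ j ∈ s, y j ≠ 0) :
    LinearIndepOn R (fun j ↦ Pi.single j (y j)) s := by
  rw [linearIndepOn_iff']
  intro t a hts hsum j hj
  have coord_eq_zero : a j • y j = 0 := by
    simpa only [← Pi.single_smul, Finset.sum_apply, Finset.sum_pi_single, hj, if_true,
      Pi.zero_apply] using congrFun hsum j
  exact (smul_eq_zero.1 coord_eq_zero).resolve_right (hy j (hts hj))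

theorem stmt_10_general {ι κ E : Type*} [DecidableEq ι] [AddCommGroup E] [Module ℝ E]
    (b : ι → E) (c : κ → E) (gval : ι → ℝ) (hgval : ∀ j, gval j ≤ 0)
    (ystar : ι → ℝ) (hystar : ∀ j, ystar j = √(-(2 * gval j))) :
    LinearIndependent ℝ
        (Sum.elim (fun j ↦ (b j, EuclideanSpace.single j (ystar j)))
          (fun i ↦ (c i, (0 : EuclideanSpace ℝ ι)))) ↔
      LinearIndependent ℝ (Sum.elim c (fun j : {j // gval j = 0} ↦ b j)) := by
  have ystar_eq_zero_iff (j : ι) : ystar j = 0 ↔ gval j = 0 := by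
    rw [hystar, Real.sqrt_eq_zero (by linarith [hgval j]), neg_eq_zero,
      mul_eq_zero_iff_left two_ne_zero]
  have hactive : ∀ j ∈ {j | gval j = 0}, EuclideanSpace.single j (ystar j) = 0 :=
    fun j hj ↦ (PiLp.single_eq_zero_iff _ _).2 ((ystar_eq_zero_iff j).2 hj)
  have hinactive : LinearIndepOn ℝ (fun j ↦ EuclideanSpace.single j (ystar j)) {j | gval j = 0}ᶜ :=
    LinearIndepOn.of_comp (WithLp.linearEquiv 2 ℝ (ι → ℝ)).toLinearMap
      (linearIndepOn_pi_single_of_ne_zero fun j hj ↦ mt (ystar_eq_zero_iff j).1 hj)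
  exact linearIndependent_sumElim_prodMk_zero_iff b c hactive hinactive

/-- Lemma B.1(i), regularity part: LICQ is preserved by squared slacks.
The family `(bⱼ, y⋆ⱼ eⱼ)_{j} ∪ (cᵢ, 0)_{i}` in `ℝⁿ × ℝᵐ`, with
`y⋆ⱼ = √(−2gⱼ)`, is linearly independent iff
`{cᵢ} ∪ {bⱼ : j active}` is linearly independent in `ℝⁿ`. -/
theorem stmt_10 {n m p : ℕ}
    (b : Fin m → EuclideanSpace ℝ (Fin n))
    (c : Fin p → EuclideanSpace ℝ (Fin n))
    (gval : Fin m → ℝ) (hgval : ∀ j, gval j ≤ 0)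
    (ystar : Fin m → ℝ) (hystar : ∀ j, ystar j = Real.sqrt (-(2 * gval j))) :
    LinearIndependent ℝ
        (Sum.elim
          (fun j : Fin m =>
            ((b j, EuclideanSpace.single j (ystar j)) :
              EuclideanSpace ℝ (Fin n) × EuclideanSpace ℝ (Fin m)))
          (fun i : Fin p =>
            ((c i, 0) : EuclideanSpace ℝ (Fin n) × EuclideanSpace ℝ (Fin m)))) ↔
      LinearIndependent ℝ
        (Sum.elim c (fun j : {j : Fin m // gval j = 0} => b j)) := by
  exact stmt_10_general b c gval hgval ystar hystar
end

section
/- (Closed-form inverse of the structured MPC projection matrix, Section 5.2.) Let M ∈ ℕ, y_a, y_b, q ∈ ℝ^M and y_c ∈ ℝ. For j = 1,…,M set δ_j := y_{a,j}² + y_{b,j}² + y_{a,j}² y_{b,j}² and assume δ_j > 0 for every j. Let D := diag(1/δ_j), A := diag(y_{a,j}²/δ_j), B := diag(y_{b,j}²/δ_j) (M×M diagonal matrices), assume σ := Σ_{j=1}^M (y_{a,j}² y_{b,j}²/δ_j) q_j² + y_c² > 0, and set r := 1/σ. Then the (2M+1)×(2M+1) block matrix G := [[I + diag(y_a)², −I,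 −q], [−I, I + diag(y_b)², q], [−qᵀ, qᵀ, qᵀq + y_c²]] is invertible, with inverse G⁻¹ = [[D + B + r(Bq)(Bq)ᵀ, D − r(Bq)(Aq)ᵀ, r·Bq], [D − r(Aq)(Bq)ᵀ, D + A + r(Aq)(Aq)ᵀ, −r·Aq], [r(Bq)ᵀ, −r(Aq)ᵀ, r]]. -/
open Matrix

/-!
Without its last row and column, `G` is `K = [[I + P, −I], [−I, I + S]]` with commuting blocks
`P = diag(y_a)²` and `S = diag(y_b)²`. Hence `(P + S + PS)D = I` gives
`K⁻¹ = [[D + B, D], [D, D + A]]` with `A = PD` and `B = SD`. The border of `G` is `w = (−q, q)`, so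
`K⁻¹w = (−Bq, Aq)`, and since `I − A − B = PSD` the Schur complement of `K` in `G` is exactly `σ`.
Therefore `G⁻¹` is `K⁻¹ + r (K⁻¹w)(K⁻¹w)ᵀ` bordered by `−r K⁻¹w`, with corner entry `r`.
-/

theorem vecMulVec_sumElim_sumElim {l m n o R : Type*} [Mul R] (x : l → R) (y : m → R) (z : n → R)
    (t : o → R) :
    vecMulVec (Sum.elim x y) (Sum.elim z t) =
      fromBlocks (vecMulVec x z) (vecMulVec x t) (vecMulVec y z) (vecMulVec y t) := by
  ext (_ | _) (_ | _) <;> rfl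

section Bordered

variable {l m n R : Type*}

/-- The bordered matrix `[[K, u], [wᵀ, c]]`: the matrix `K` with one extra column `u`, one extra row
`w` and corner entry `c`, the extra index being the point of `Unit`. -/
def bordered (K : Matrix m n R) (u : m → R) (w : n → R) (c : R) :
    Matrix (m ⊕ Unit) (n ⊕ Unit) R :=
  fromBlocks K (replicateCol Unit u) (replicateRow Unit w) (of fun _ _ => c)

theorem bordered_one [DecidableEq n] [Zero R] [One R] :
    bordered (1 : Matrix n n R) 0 0 1 = 1 := by
  rw [← fromBlocks_one]
  rfl

theorem bordered_mul_bordered [Fintype m] [CommSemiring R] (K : Matrix l m R) (u : l → R)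
    (w : m → R) (c : R) (L : Matrix m n R) (x : m → R) (y : n → R) (d : R) :
    bordered K u w c * bordered L x y d =
      bordered (K * L + vecMulVec u y) (K *ᵥ x + d • u) (w ᵥ* L + c • y) (w ⬝ᵥ x + c * d) := by
  rw [bordered, bordered, fromBlocks_multiply, bordered, ← vecMulVec_eq, ← replicateCol_mulVec,
    ← replicateRow_vecMul]
  congr 1 <;> ext <;> simp [mul_apply, dotProduct, mul_comm]

theorem bordered_mul_bordered_eq_one [Fintype n] [DecidableEq n] [CommRing R]
    {K L : Matrix n n R} {u w : n → R} {c r : R} (hKL : K * L = 1)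
    (hr : (c - w ⬝ᵥ L *ᵥ u) * r = 1) :
    bordered K u w c *
      bordered (L + r • vecMulVec (L *ᵥ u) (w ᵥ* L)) (-(r • L *ᵥ u)) (-(r • w ᵥ* L)) r = 1 := by
  have hKLu : K *ᵥ L *ᵥ u = u := by rw [mulVec_mulVec, hKL, one_mulVec]
  rw [bordered_mul_bordered, ← bordered_one]
  congr 1
  · rw [mul_add, hKL, mul_smul_comm, mul_vecMulVec, hKLu, vecMulVec_neg, vecMulVec_smul,
      add_neg_cancel_right]
  · rw [mulVec_neg, mulVec_smul, hKLu, neg_add_cancel]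
  · rw [vecMul_add, vecMul_smul, vecMul_vecMulVec]
    match_scalars
    linear_combination -hr
  · rw [dotProduct_neg, dotProduct_smul, smul_eq_mul]
    linear_combination hr

end Bordered

section BoxGram

variable {n R : Type*} [DecidableEq n]

/-- The block matrix `[[I + P, −I], [−I, I + S]]`: the Gram matrix of `[−I | I]`, the gradient of
the box constraints, with the regularizations `P` and `S` added to its diagonal blocks. -/
def boxGram [Ring R] (P S : Matrix n n R) : Matrix (n ⊕ n) (n ⊕ n) R :=
  fromBlocks (1 + P) (-1) (-1) (1 + S)

theorem boxGram_mul_fromBlocks_eq_one [Fintype n] [Ring R] {P S D : Matrix n n R}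
    (hPS : Commute P S) (hD : (P + S + P * S) * D = 1) :
    boxGram P S * fromBlocks (D + S * D) D D (D + P * D) = 1 := by
  rw [boxGram, fromBlocks_multiply, ← fromBlocks_one]
  congr 1
  · refine .trans ?_ hD
    noncomm_ring
  · noncomm_ring
  · noncomm_ring
  · rw [hPS.eq] at hD
    refine .trans ?_ hD
    noncomm_ring

theorem bordered_boxGram_mul_bordered_eq_one [Fintype n] [CommRing R] {P S D : Matrix n n R}
    (hPS : Commute P S) (hD : (P + S + P * S) * D = 1) {A B : Matrix n n R} (hA : A = P * D)
    (hB : B = S * D) {p q : n → R} {c r : R} (hr : (p ⬝ᵥ (P * B) *ᵥ q + c) * r = 1) :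
    bordered (boxGram P S) (Sum.elim (-q) q) (Sum.elim (-p) p) (p ⬝ᵥ q + c) *
      bordered
        (fromBlocks
          (D + B + r • vecMulVec (B *ᵥ q) (p ᵥ* B)) (D - r • vecMulVec (B *ᵥ q) (p ᵥ* A))
          (D - r • vecMulVec (A *ᵥ q) (p ᵥ* B)) (D + A + r • vecMulVec (A *ᵥ q) (p ᵥ* A)))
        (Sum.elim (r • B *ᵥ q) (-(r • A *ᵥ q))) (Sum.elim (r • p ᵥ* B) (-(r • p ᵥ* A))) r = 1 := by
  set L := fromBlocks (D + B) D D (D + A) with hL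
  have hKL : boxGram P S * L = 1 := by
    rw [hL, hA, hB]
    exact boxGram_mul_fromBlocks_eq_one hPS hD
  have hLq : L *ᵥ Sum.elim (-q) q = Sum.elim (-(B *ᵥ q)) (A *ᵥ q) := by
    simp [hL, fromBlocks_mulVec, add_mulVec, mulVec_neg]
  have hpL : Sum.elim (-p) p ᵥ* L = Sum.elim (-(p ᵥ* B)) (p ᵥ* A) := by
    simp [hL, vecMul_fromBlocks, vecMul_add, neg_vecMul]
  have hq : q = A *ᵥ q + B *ᵥ q + (P * B) *ᵥ q := by
    rw [← add_mulVec, ← add_mulVec, hA, hB, ← mul_assoc, ← add_mul, ← add_mul, hD, one_mulVec]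
  have hschur : p ⬝ᵥ q + c - Sum.elim (-p) p ⬝ᵥ L *ᵥ Sum.elim (-q) q =
      p ⬝ᵥ (P * B) *ᵥ q + c := by
    have hpq := congrArg (p ⬝ᵥ ·) hq
    simp only [dotProduct_add] at hpq
    rw [hLq, sumElim_dotProduct_sumElim, neg_dotProduct_neg]
    linear_combination hpq
  have hinv := bordered_mul_bordered_eq_one hKL (hschur ▸ hr)
  have hneg (x y : n → R) : -(r • Sum.elim (-x) y) = Sum.elim (r • x) (-(r • y)) := by
    ext (_ | _) <;> simp
  rw [hLq, hpL, hneg, hneg, vecMulVec_sumElim_sumElim, hL, fromBlocks_smul, fromBlocks_add] at hinv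
  simpa only [neg_vecMulVec, vecMulVec_neg, neg_neg, smul_neg, ← sub_eq_add_neg] using hinv

end BoxGram

theorem stmt_16_general {ι k : Type*} [Fintype ι] [DecidableEq ι] [Field k] (a b q : ι → k) (c : k)
    (δ : ι → k) (hδ : ∀ j, δ j = a j + b j + a j * b j) (hδ₀ : ∀ j, δ j ≠ 0)
    (σ : k) (hσ : σ = ∑ j, a j * b j / δ j * q j ^ 2 + c) (hσ₀ : σ ≠ 0) :
    let D := diagonal fun j => 1 / δ j
    let A := diagonal fun j => a j / δ j
    let B := diagonal fun j => b j / δ j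
    let Aq := fun j => a j / δ j * q j
    let Bq := fun j => b j / δ j * q j
    let r := 1 / σ
    let G := bordered (boxGram (diagonal a) (diagonal b)) (Sum.elim (-q) q) (Sum.elim (-q) q)
      (∑ j, q j ^ 2 + c)
    IsUnit G ∧ G⁻¹ =
      bordered
        (fromBlocks
          (D + B + r • vecMulVec Bq Bq) (D - r • vecMulVec Bq Aq)
          (D - r • vecMulVec Aq Bq) (D + A + r • vecMulVec Aq Aq))
        (Sum.elim (r • Bq) (-(r • Aq))) (Sum.elim (r • Bq) (-(r • Aq))) r := by
  intro D A B Aq Bq r G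
  have hD : (diagonal a + diagonal b + diagonal a * diagonal b) * D = 1 := by
    rw [diagonal_mul_diagonal, diagonal_add, diagonal_add, diagonal_mul_diagonal, ← diagonal_one]
    congr 1 with j
    rw [← hδ, mul_one_div_cancel (hδ₀ j)]
  have hA : A = diagonal a * D := by simp [A, D, div_eq_mul_inv]
  have hB : B = diagonal b * D := by simp [B, D, div_eq_mul_inv]
  have hr : (q ⬝ᵥ (diagonal a * B) *ᵥ q + c) * r = 1 := by
    have hquad : q ⬝ᵥ (diagonal a * B) *ᵥ q = ∑ j, a j * b j / δ j * q j ^ 2 := by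
      simp only [B, diagonal_mul_diagonal, dotProduct, mulVec_diagonal]
      exact Finset.sum_congr rfl fun j _ => by ring
    rw [hquad, ← hσ, mul_one_div_cancel hσ₀]
  have hinv := bordered_boxGram_mul_bordered_eq_one (commute_diagonal a b) hD hA hB hr
  have hAq : A *ᵥ q = Aq := funext (mulVec_diagonal _ _)
  have hBq : B *ᵥ q = Bq := funext (mulVec_diagonal _ _)
  have hqA : q ᵥ* A = Aq := by rw [← hAq, ← vecMul_transpose, diagonal_transpose]
  have hqB : q ᵥ* B = Bq := by rw [← hBq, ← vecMul_transpose, diagonal_transpose]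
  have hqq : q ⬝ᵥ q = ∑ j, q j ^ 2 := by simp only [dotProduct, sq]
  rw [hAq, hBq, hqA, hqB, hqq] at hinv
  exact ⟨.of_mul_eq_one _ hinv, inv_eq_right_inv hinv⟩

/-- Closed-form inverse of the structured MPC projection matrix (Section 5.2).
With `δⱼ = y_{a,j}² + y_{b,j}² + y_{a,j}²y_{b,j}² > 0`, `D = diag(1/δⱼ)`,
`A = diag(y_{a,j}²/δⱼ)`, `B = diag(y_{b,j}²/δⱼ)`,
`σ = Σⱼ (y_{a,j}²y_{b,j}²/δⱼ) qⱼ² + y_c² > 0` and `r = 1/σ`, the block matrix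
`G = [[I + diag(y_a)², −I, −q], [−I, I + diag(y_b)², q], [−qᵀ, qᵀ, qᵀq + y_c²]]`
is invertible with the displayed inverse. -/
theorem stmt_16 {M : ℕ} (ya yb q : Fin M → ℝ) (yc : ℝ)
    (δ : Fin M → ℝ) (hδdef : ∀ j, δ j = (ya j) ^ 2 + (yb j) ^ 2 + (ya j) ^ 2 * (yb j) ^ 2)
    (hδpos : ∀ j, 0 < δ j)
    (D A B : Matrix (Fin M) (Fin M) ℝ)
    (hD : D = Matrix.diagonal fun j => 1 / δ j)
    (hA : A = Matrix.diagonal fun j => (ya j) ^ 2 / δ j)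
    (hB : B = Matrix.diagonal fun j => (yb j) ^ 2 / δ j)
    (Aq Bq : Fin M → ℝ)
    (hAq : Aq = fun j => (ya j) ^ 2 / δ j * q j)
    (hBq : Bq = fun j => (yb j) ^ 2 / δ j * q j)
    (σ : ℝ) (hσdef : σ = (∑ j, (ya j) ^ 2 * (yb j) ^ 2 / δ j * (q j) ^ 2) + yc ^ 2)
    (hσpos : 0 < σ)
    (r : ℝ) (hr : r = 1 / σ)
    (G Ginv : Matrix ((Fin M ⊕ Fin M) ⊕ Unit) ((Fin M ⊕ Fin M) ⊕ Unit) ℝ)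
    (hG : G =
      Matrix.fromBlocks
        (Matrix.fromBlocks
          (1 + Matrix.diagonal fun j => (ya j) ^ 2) (-1)
          (-1) (1 + Matrix.diagonal fun j => (yb j) ^ 2))
        (Matrix.of fun i (_ : Unit) => Sum.elim (fun j => -q j) (fun j => q j) i)
        (Matrix.of fun (_ : Unit) i => Sum.elim (fun j => -q j) (fun j => q j) i)
        (Matrix.of fun (_ : Unit) (_ : Unit) => (∑ j, (q j) ^ 2) + yc ^ 2))
    (hGinv : Ginv =
      Matrix.fromBlocks
        (Matrix.fromBlocks
          (D + B + r • Matrix.vecMulVec Bq Bq) (D - r • Matrix.vecMulVec Bq Aq)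
          (D - r • Matrix.vecMulVec Aq Bq) (D + A + r • Matrix.vecMulVec Aq Aq))
        (Matrix.of fun i (_ : Unit) => Sum.elim (fun j => r * Bq j) (fun j => -(r * Aq j)) i)
        (Matrix.of fun (_ : Unit) i => Sum.elim (fun j => r * Bq j) (fun j => -(r * Aq j)) i)
        (Matrix.of fun (_ : Unit) (_ : Unit) => r)) :
    IsUnit G ∧ G⁻¹ = Ginv := by
  subst hD hA hB hAq hBq hr hG hGinv
  exact stmt_16_general _ _ q _ δ hδdef (fun j => (hδpos j).ne') σ hσdef hσpos.ne'
end
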